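/- arXiv:2108.12312 — 2 statements merged into one kernel-verified Lean document; each statement's English description precedes it below -/
import Mathlib

section
/- Let p, q ∈ R be idempotents. Then (1-p) - q is group invertible if and only if q1 and (1-p) - q4 are group invertible and the following hold: ((1-p)-q4)^# * q3 = q3 * q1^#, q3 * q1^π = 0, ((1-p)-q4)^π * q3 = 0, q2 * ((1-p)-q4)^# = q1^# * q2, q1^π * q2 = 0, q2 * ((1-p)-q4)^π = 0. In this case ((1-p) - q)^# = -q1^#*q1 - q1^#*q2 - ((1-p)-q4)^#*q3 + ((1-p)-q4)^#*((1-p)-q4). -/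
/-!
Write `r = 1 - p`, `a = r - q` and `s = r - q4`. Idempotency of `q` gives `a ^ 2 = q1 + s`, which
is block diagonal with respect to `p` and commutes with both `p` and `q`.

If `a` has group inverse `c`, then `c ^ 2` is the group inverse of `a ^ 2`. Group inverses lie in the
double commutant (`IsGroupInvOf.commute`), so `c ^ 2` commutes with `p` and `q`, and its diagonal
blocks `p * c ^ 2` and `r * c ^ 2` are the group inverses of `q1` and `s`. The six identities
follow from `a * (1 - a * c) = 0`, and the formula from `c = c ^ 2 * a`.

Conversely, the six identities say that `z = q1^# + s^#` commutes with `a` and that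
`a ^ 2 * z * a = a`; hence `z * a` is a group inverse of `a`.
-/

variable {R : Type*} [Ring R]

/-- `c` is a group inverse of `a`. -/
def IsGroupInvOf (a c : R) : Prop := a * c * a = a ∧ c * a * c = c ∧ a * c = c * a

/-- `a` is group invertible. -/
def GroupInvertible (a : R) : Prop := ∃ c, IsGroupInvOf a c

/-- The group inverse `a^#` (junk value `0` if it does not exist). -/
noncomputable def gi (a : R) : R :=
  haveI := Classical.dec (GroupInvertible a)
  if h : GroupInvertible a then h.choose else 0

/-- The spectral idempotent `a^π = 1 - a * a^#`. -/
noncomputable def sp (a : R) : R := 1 - a * gi a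

/-- A group inverse of `a` commutes with everything that commutes with `a`. -/
lemma IsGroupInvOf.commute {a c b : R} (h : IsGroupInvOf a c) (hb : a * b = b * a) :
    c * b = b * c := by
  obtain ⟨h1, h2, h3⟩ := h
  -- both sides equal `c * a * b * c`
  have e1 : c * b = c * a * b * c := by
    linear_combination (norm := noncomm_ring) -(h2 * b) + c * h3 * b + c * c * hb
      - c * c * b * h1 - c * c * b * a * h3 - c * c * hb * a * c - c * c * a * hb * c
      - c * h3 * a * b * c + c * h1 * b * c
  have e2 : b * c = c * a * b * c := by
    linear_combination (norm := noncomm_ring) -(b * h2) - b * h3 * c - hb * c * c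
      - h1 * b * c * c + h3 * a * b * c * c + c * a * hb * c * c + c * a * b * h3 * c
      + c * a * b * h2
  rw [e1, e2]

lemma IsGroupInvOf.unique {a c d : R} (hc : IsGroupInvOf a c) (hd : IsGroupInvOf a d) :
    c = d := by
  obtain ⟨c1, c2, c3⟩ := hc
  obtain ⟨d1, d2, d3⟩ := hd
  have e : a * c = a * d := by
    linear_combination (norm := noncomm_ring) -(d1 * c) + d3 * a * c + d * a * c3 + d * c1 - d3
  linear_combination (norm := noncomm_ring) -c2 + c * e - c3 * d + e * d + d3 * d + d2

lemma GroupInvertible.isGroupInvOf_gi {a : R} (h : GroupInvertible a) :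
    IsGroupInvOf a (gi a) := by
  unfold gi
  rw [dif_pos h]
  exact h.choose_spec

lemma IsGroupInvOf.gi_eq {a c : R} (h : IsGroupInvOf a c) : gi a = c :=
  (GroupInvertible.isGroupInvOf_gi ⟨c, h⟩).unique h

lemma IsGroupInvOf.mul_left_eq {a c e : R} (h : IsGroupInvOf a c) (he : e * a = a) :
    e * c = c := by
  obtain ⟨-, h2, h3⟩ := h
  linear_combination (norm := noncomm_ring) -(e * h2) - e * h3 * c + he * c * c + h3 * c + h2

lemma IsGroupInvOf.mul_right_eq {a c e : R} (h : IsGroupInvOf a c) (he : a * e = a) :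
    c * e = c := by
  obtain ⟨-, h2, h3⟩ := h
  linear_combination (norm := noncomm_ring) -(h2 * e) + c * h3 * e + c * c * he - c * h3 + h2

/-- The corner `e * a ^ 2` cut out by an idempotent `e` commuting with `a ^ 2` has group inverse
`e * c ^ 2`, where `c` is the group inverse of `a`. -/
lemma IsGroupInvOf.corner_sq {a c e : R} (h : IsGroupInvOf a c) (he : e * e = e)
    (hea : a * a * e = e * (a * a)) (hec : c * c * e = e * (c * c)) :
    IsGroupInvOf (e * (a * a)) (e * (c * c)) := by
  obtain ⟨h1, h2, h3⟩ := h
  have hac : a * a * (c * c) = a * c := by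
    linear_combination (norm := noncomm_ring) a * h3 * c + h1 * c
  have hca : c * c * (a * a) = a * c := by
    linear_combination (norm := noncomm_ring) -(c * h3 * a) + h2 * a - h3
  have f1 : e * (a * a) * (e * (c * c)) = e * (a * c) := by
    linear_combination (norm := noncomm_ring) e * hea * (c * c) + he * (a * a * c * c) + e * hac
  have f2 : e * (c * c) * (e * (a * a)) = e * (a * c) := by
    linear_combination (norm := noncomm_ring) e * hec * (a * a) + he * (c * c * a * a) + e * hca
  refine ⟨?_, ?_, by rw [f1, f2]⟩
  · linear_combination (norm := noncomm_ring) e * (a * a) * f2 + e * hea * a * c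
      + he * a * a * a * c + e * a * a * h3 + e * a * h1
  · linear_combination (norm := noncomm_ring) e * (c * c) * f1 + e * hec * a * c
      + he * c * c * a * c + e * c * h2

/-- The relations satisfied by the block `f * a * e` of `a`, where `A` and `D` play the roles of
`a ^ 2` and its group inverse. -/
lemma block_relations {a A D e f : R} (he : e * e = e) (hf : f * f = f)
    (hAe : A * e = e * A) (hDe : D * e = e * D) (hAf : A * f = f * A) (hDf : D * f = f * D)
    (hDa : D * a = a * D) (hADa : A * D * a = a) (haAD : a * A * D = a) :
    f * D * (f * a * e) = f * a * e * (e * D) ∧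
      f * a * e * (1 - e * A * (e * D)) = 0 ∧ (1 - f * A * (f * D)) * (f * a * e) = 0 := by
  refine ⟨?_, ?_, ?_⟩
  · linear_combination (norm := noncomm_ring) f * hDf * a * e + hf * D * a * e + f * hDa * e
      + f * a * hDe - f * a * he * D
  · linear_combination (norm := noncomm_ring) -(f * a * he * A * e * D) + f * a * hAe * e * D
      - f * a * A * he * D + f * a * A * hDe - f * haAD * e
  · linear_combination (norm := noncomm_ring) -(f * A * f * hDf * a * e) - f * A * hf * D * a * e
      - f * hAf * D * a * e - hf * A * D * a * e - f * hADa * e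

theorem group_inv_pbar_sub_q (p q q1 q2 q3 q4 : R) (hp : p * p = p) (hq : q * q = q)
    (h1 : q1 = p * q * p) (h2 : q2 = p * q * (1 - p))
    (h3 : q3 = (1 - p) * q * p) (h4 : q4 = (1 - p) * q * (1 - p)) :
    (GroupInvertible ((1 - p) - q) ↔
      GroupInvertible q1 ∧ GroupInvertible ((1 - p) - q4) ∧
        gi ((1 - p) - q4) * q3 = q3 * gi q1 ∧ q3 * sp q1 = 0 ∧ sp ((1 - p) - q4) * q3 = 0 ∧
        q2 * gi ((1 - p) - q4) = gi q1 * q2 ∧ sp q1 * q2 = 0 ∧ q2 * sp ((1 - p) - q4) = 0) ∧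
    (GroupInvertible ((1 - p) - q) →
      gi ((1 - p) - q) =
        -(gi q1 * q1) - gi q1 * q2 - gi ((1 - p) - q4) * q3 +
          gi ((1 - p) - q4) * ((1 - p) - q4)) := by
  have hpp : ∀ x, p * (p * x) = p * x := fun x => by rw [← mul_assoc, hp]
  have hr : (1 - p) * (1 - p) = 1 - p := by
    linear_combination (norm := noncomm_ring) hp
  have hpr : p * (1 - p) = 0 := by linear_combination (norm := noncomm_ring) -hp
  have hrp : (1 - p) * p = 0 := by linear_combination (norm := noncomm_ring) -hp
  obtain ⟨a, ha⟩ : ∃ a, a = (1 - p) - q := ⟨_, rfl⟩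
  obtain ⟨s, hs⟩ : ∃ s, s = (1 - p) - q4 := ⟨_, rfl⟩
  rw [← ha, ← hs]
  have hap : a * a * p = p * (a * a) := by
    rw [ha]
    simp only [mul_sub, sub_mul, mul_one, one_mul, mul_assoc, hp, hq, hpp]
    abel
  have har : a * a * (1 - p) = (1 - p) * (a * a) := by
    linear_combination (norm := noncomm_ring) -hap
  have hq1 : q1 = p * (a * a) := by
    rw [h1, ha]
    simp only [mul_sub, sub_mul, mul_one, one_mul, mul_assoc, hp, hq, hpp]
    abel
  have hs1 : s = (1 - p) * (a * a) := by
    rw [hs, h4, ha]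
    simp only [mul_sub, sub_mul, mul_one, one_mul, mul_assoc, hp, hq, hpp]
    abel
  have haa : a * a = q1 + s := by rw [hq1, hs1]; noncomm_ring
  have b1 : q1 = -(p * a * p) := by
    rw [h1, ha]; linear_combination (norm := noncomm_ring) hpr * p
  have b2 : q2 = -(p * a * (1 - p)) := by
    rw [h2, ha]; linear_combination (norm := noncomm_ring) hpr * (1 - p)
  have b3 : q3 = -((1 - p) * a * p) := by
    rw [h3, ha]; linear_combination (norm := noncomm_ring) (1 - p) * hrp
  have b4 : s = (1 - p) * a * (1 - p) := by
    rw [hs, h4, ha]; linear_combination (norm := noncomm_ring) -(hr * (1 - p)) - hr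
  have hsum : a = -q1 - q2 - q3 + s := by rw [b1, b2, b3, b4]; noncomm_ring
  have forward : ∀ c, IsGroupInvOf a c →
      IsGroupInvOf q1 (p * (c * c)) ∧ IsGroupInvOf s ((1 - p) * (c * c)) ∧
      c * c * p = p * (c * c) := by
    intro c hc
    have hD : IsGroupInvOf (a * a) (c * c) := by
      simpa using hc.corner_sq (e := 1) (by simp) (by simp) (by simp)
    have hDp := hD.commute hap
    rw [hq1, hs1]
    exact ⟨hc.corner_sq hp hap hDp, hc.corner_sq hr har (hD.commute har), hDp⟩
  refine ⟨⟨?_, ?_⟩, ?_⟩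
  · rintro ⟨c, hc⟩
    obtain ⟨i1, i4, hDp⟩ := forward c hc
    refine ⟨⟨_, i1⟩, ⟨_, i4⟩, ?_⟩
    obtain ⟨c1, c2, c3⟩ := hc
    have hDr : c * c * (1 - p) = (1 - p) * (c * c) := by
      linear_combination (norm := noncomm_ring) -hDp
    have hDa : c * c * a = a * (c * c) := by
      linear_combination (norm := noncomm_ring) -(c * c3) - c3 * c
    have hADa : a * a * (c * c) * a = a := by
      linear_combination (norm := noncomm_ring) a * c3 * c * a + c1 * c * a + c1
    have haAD : a * (a * a) * (c * c) = a := by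
      linear_combination (norm := noncomm_ring) a * a * c3 * c + a * c1 * c + a * c3 + c1
    obtain ⟨k1, k2, k3⟩ := block_relations hp hr hap hDp har hDr hDa hADa haAD
    obtain ⟨l1, l2, l3⟩ := block_relations hr hp har hDr hap hDp hDa hADa haAD
    unfold sp
    rw [i1.gi_eq, i4.gi_eq, hq1, hs1, b2, b3]
    simp only [mul_neg, neg_mul, neg_inj, neg_eq_zero]
    exact ⟨k1, k2, k3, l1.symm, l3, l2⟩
  · rintro ⟨g1, g4, e1, e2, e3, e4, e5, e6⟩
    have i1 := g1.isGroupInvOf_gi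
    have i4 := g4.isGroupInvOf_gi
    unfold sp at e2 e3 e5 e6
    generalize gi q1 = x at *
    generalize gi s = y at *
    have pq1 : p * q1 = q1 := by rw [hq1, hpp]
    have q1p : q1 * p = q1 := by rw [b1, neg_mul, mul_assoc, hp]
    have rs : (1 - p) * s = s := by rw [hs1, ← mul_assoc, hr]
    have sr : s * (1 - p) = s := by rw [b4, mul_assoc, hr]
    have pq2 : p * q2 = q2 := by rw [h2, mul_assoc, hpp]
    have q2r : q2 * (1 - p) = q2 := by rw [h2, mul_assoc, hr]
    have rq3 : (1 - p) * q3 = q3 := by rw [h3, ← mul_assoc, ← mul_assoc, hr]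
    have q3p : q3 * p = q3 := by rw [h3, mul_assoc, hp]
    have px := i1.mul_left_eq pq1
    have xp := i1.mul_right_eq q1p
    have ry := i4.mul_left_eq rs
    have yr := i4.mul_right_eq sr
    -- products whose inner blocks do not match vanish
    have zpr : ∀ {u v : R}, u * p = u → (1 - p) * v = v → u * v = 0 := fun {u v} hu hv => by
      rw [← hu, ← hv, mul_assoc, ← mul_assoc p, hpr, zero_mul, mul_zero]
    have zrp : ∀ {u v : R}, u * (1 - p) = u → p * v = v → u * v = 0 := fun {u v} hu hv => by
      rw [← hu, ← hv, mul_assoc, ← mul_assoc (1 - p), hrp, zero_mul, mul_zero]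
    obtain ⟨x1, x2, x3⟩ := i1
    obtain ⟨y1, y2, y3⟩ := i4
    have hza : (x + y) * a = a * (x + y) := by
      rw [hsum]
      linear_combination (norm := noncomm_ring) x3 - y3 - e1 + e4 - zpr xp rq3 + zpr xp rs
        - zrp yr pq1 - zrp yr pq2 + zpr q1p ry + zrp q2r px + zpr q3p ry - zrp sr px
    have haz : a * a * (x + y) = q1 * x + s * y := by
      rw [haa]
      linear_combination (norm := noncomm_ring) zpr q1p ry + zrp sr px
    have haza : a * a * (x + y) * a = a := by
      rw [haz, hsum]
      linear_combination (norm := noncomm_ring) -x1 + e5 + e3 + y1 - q1 * zpr xp rq3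
        + q1 * zpr xp rs - s * zrp yr pq1 - s * zrp yr pq2
    have hzaz : (x + y) * (a * a * (x + y)) = x + y := by
      rw [haz]
      linear_combination (norm := noncomm_ring) x2 + y2 + zpr xp rs * y + zrp yr pq1 * x
    refine ⟨(x + y) * a, ?_, ?_, ?_⟩
    · linear_combination (norm := noncomm_ring) a * hza * a + haza
    · linear_combination (norm := noncomm_ring) hzaz * a
    · linear_combination (norm := noncomm_ring) -(hza * a)
  · rintro ⟨c, hc⟩
    obtain ⟨i1, i4, hDp⟩ := forward c hc
    rw [hc.gi_eq, i1.gi_eq, i4.gi_eq]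
    obtain ⟨-, c2, c3⟩ := hc
    -- the right-hand side collapses to `(p + (1 - p)) * c ^ 2 * a = c`
    have t1 : p * (c * c) * p = p * (c * c) := by
      linear_combination (norm := noncomm_ring) p * hDp + hp * (c * c)
    have t2 : (1 - p) * (c * c) * (1 - p) = (1 - p) * (c * c) := by
      linear_combination (norm := noncomm_ring) -hDp + p * hDp + hp * (c * c)
    rw [b1, b2, b3, b4]
    linear_combination (norm := noncomm_ring) -c2 + c * c3 - t1 * a - t2 * a
end

section
/- Let p, q ∈ R be idempotents such that p - q is group invertible. Then p - q1 and q4 are group invertible and (p-q)*(p-q)^# = (p-q1)*(p-q1)^# + q4*q4^#; equivalently, the spectral idempotent satisfies (p-q)^π = (p-q1)^π + q4^π - 1. -/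
/-!
Write `a = p - q`. The square `a²` commutes with `p`, and its diagonal Peirce blocks with respect
to `p` are `p * a² = p - q1` and `(1 - p) * a² = q4`. The group inverse of `a²` is `(a^#)²`, and it
commutes with everything commuting with `a²`, in particular with `p` (`IsGroupInvOf.comm`). Hence
cutting down by the idempotents `p` and `1 - p` gives `(p - q1)^# = p * (a^#)²` and
`q4^# = (1 - p) * (a^#)²` (`IsGroupInvOf.cut`), and
`p * a² * (a^#)² + (1 - p) * a² * (a^#)² = a² * (a^#)² = a * a^#`.
-/

variable {R : Type*} [Ring R]

/-- The group inverse of `b` lies in the double commutant of `b`. -/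
theorem IsGroupInvOf.comm {b d x : R} (h : IsGroupInvOf b d) (hx : x * b = b * x) :
    x * d = d * x := by
  obtain ⟨h1, h2, h3⟩ := h
  -- `x` first commutes with the idempotent `b * d`, as both products equal `b * d * x * (b * d)`.
  have l : b * d * x * (b * d) = b * d * x := by
    calc b * d * x * (b * d) = d * (b * x) * (b * d) := by rw [h3]; simp only [mul_assoc]
      _ = d * x * (b * (b * d)) := by rw [← hx]; simp only [mul_assoc]
      _ = d * x * (b * d * b) := by rw [mul_assoc b d b, ← h3]
      _ = d * (x * b) := by rw [h1, mul_assoc]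
      _ = b * d * x := by rw [hx, h3, mul_assoc]
  have r : b * d * x * (b * d) = x * (b * d) := by
    calc b * d * x * (b * d) = b * d * (x * b) * d := by simp only [mul_assoc]
      _ = b * d * b * x * d := by rw [hx]; simp only [mul_assoc]
      _ = x * (b * d) := by rw [h1, ← hx, mul_assoc]
  have e : x * (b * d) = b * d * x := r.symm.trans l
  calc x * d = x * (b * d) * d := by rw [h3, mul_assoc, h2]
    _ = b * d * x * d := by rw [e]
    _ = d * (b * x) * d := by rw [h3]; simp only [mul_assoc]
    _ = d * (x * (b * d)) := by rw [← hx]; simp only [mul_assoc]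
    _ = d * b * d * x := by rw [e]; simp only [mul_assoc]
    _ = d * x := by rw [h2]

theorem IsGroupInvOf.sq_mul_sq {a c : R} (h : IsGroupInvOf a c) :
    a * a * (c * c) = a * c := by
  calc a * a * (c * c) = a * (a * c) * c := by simp only [mul_assoc]
    _ = a * (c * a) * c := by rw [h.2.2]
    _ = a * c := by rw [← mul_assoc, h.1]

theorem IsGroupInvOf.sq {a c : R} (h : IsGroupInvOf a c) : IsGroupInvOf (a * a) (c * c) := by
  have e := h.sq_mul_sq
  obtain ⟨h1, h2, h3⟩ := h
  have k : Commute a c := h3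
  have e' : c * c * (a * a) = a * c := by
    rw [← e]; exact ((k.mul_left k).mul_right (k.mul_left k)).eq.symm
  refine ⟨?_, ?_, e.trans e'.symm⟩
  · rw [e, ← mul_assoc, h1]
  · rw [e', h3, ← mul_assoc, h2]

theorem idem_mul_idem_mul {e x : R} (y : R) (he : e * e = e) (hx : e * x = x * e) :
    e * x * (e * y) = e * (x * y) := by
  rw [hx, mul_assoc, ← mul_assoc e e, he, ← mul_assoc, ← hx, mul_assoc]

theorem IsGroupInvOf.cut {b d e : R} (h : IsGroupInvOf b d) (he : e * e = e)
    (hb : e * b = b * e) : IsGroupInvOf (e * b) (e * d) := by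
  have hd := h.comm hb
  obtain ⟨h1, h2, h3⟩ := h
  have hbd : e * (b * d) = b * d * e := by rw [← mul_assoc, hb, mul_assoc, hd, mul_assoc]
  refine ⟨?_, ?_, ?_⟩
  · rw [idem_mul_idem_mul d he hb, idem_mul_idem_mul b he hbd, h1]
  · rw [idem_mul_idem_mul b he hd, idem_mul_idem_mul d he (h3 ▸ hbd), h2]
  · rw [idem_mul_idem_mul d he hb, idem_mul_idem_mul b he hd, h3]

/-- In the product `a * gi a`, the chosen group inverse may be replaced by any other one. -/
theorem IsGroupInvOf.mul_gi {a c : R} (h : IsGroupInvOf a c) : a * gi a = a * c := by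
  have hg : GroupInvertible a := ⟨c, h⟩
  have h' : IsGroupInvOf a (gi a) := by
    unfold gi
    rw [dif_pos hg]
    exact hg.choose_spec
  calc a * gi a = a * c * (a * gi a) := by rw [← mul_assoc, h.1]
    _ = c * (a * gi a * a) := by rw [h.2.2, h'.2.2]; simp only [mul_assoc, ← h'.2.2]
    _ = a * c := by rw [h'.1, h.2.2]

theorem spectral_idem_p_sub_q (p q q1 q2 q3 q4 : R) (hp : p * p = p) (hq : q * q = q)
    (h1 : q1 = p * q * p) (h2 : q2 = p * q * (1 - p))
    (h3 : q3 = (1 - p) * q * p) (h4 : q4 = (1 - p) * q * (1 - p))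
    (hpq : GroupInvertible (p - q)) :
    GroupInvertible (p - q1) ∧ GroupInvertible q4 ∧
      (p - q) * gi (p - q) = (p - q1) * gi (p - q1) + q4 * gi q4 ∧
      sp (p - q) = sp (p - q1) + sp q4 - 1 := by
  obtain ⟨c, hc⟩ := hpq
  have hqp : q * (q * p) = q * p := by rw [← mul_assoc, hq]
  have hpp : p * (p * q) = p * q := by rw [← mul_assoc, hp]
  have e1 : p * ((p - q) * (p - q)) = p - q1 := by
    rw [h1]; simp only [mul_sub, sub_mul, hp, hq, hpp, mul_assoc]; abel
  have e1' : (p - q) * (p - q) * p = p - q1 := by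
    rw [h1]; simp only [mul_sub, sub_mul, hp, hqp, mul_assoc]; abel
  have e4 : (1 - p) * ((p - q) * (p - q)) = q4 := by
    rw [sub_mul, e1, h1, h4]
    simp only [mul_sub, sub_mul, hp, hq, one_mul, mul_one, mul_assoc]; abel
  have hpa : p * ((p - q) * (p - q)) = (p - q) * (p - q) * p := e1.trans e1'.symm
  have hs := hc.sq
  have g1 := hs.cut hp hpa
  have hp' : (1 - p) * (1 - p) = 1 - p := by simp [mul_sub, sub_mul, hp]
  have hpa' : (1 - p) * ((p - q) * (p - q)) = (p - q) * (p - q) * (1 - p) := by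
    rw [sub_mul, one_mul, hpa, mul_sub _ 1 p, mul_one]
  have g4 := hs.cut hp' hpa'
  have hsum : (p - q) * gi (p - q) = (p - q1) * gi (p - q1) + q4 * gi q4 := by
    rw [← e1, ← e4, g1.mul_gi, g4.mul_gi, hc.mul_gi]
    rw [idem_mul_idem_mul _ hp hpa, idem_mul_idem_mul _ hp' hpa', ← add_mul, add_sub_cancel,
      one_mul, hc.sq_mul_sq]
  refine ⟨⟨_, e1 ▸ g1⟩, ⟨_, e4 ▸ g4⟩, hsum, ?_⟩
  unfold sp
  rw [hsum]; abel
end
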